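/- arXiv:2411.04031 — 4 statements merged into one kernel-verified Lean document; each statement's English description precedes it below -/
import Mathlib

section
/- Every truth-conditional formula φ of L_⟹ is logically equivalent to a declarative; in particular, φ is equivalent to the declarative φ^! obtained by recursively replacing each occurrence of ⩔ not within the scope of ⟹ by the defined declarative disjunction ∨ (where φ^! = φ for atoms, ⊥ and modal formulas, (φ∧ψ)^! = φ^!∧ψ^!, (φ⩔ψ)^! = φ^!∨ψ^!, (φ→ψ)^! = φ^!→ψ^!). -/
/-- Formulas of the inquisitive modal language `L_⟹`. -/
inductive Form (P : Type) : Type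
  | atom : P → Form P
  | bot : Form P
  | and : Form P → Form P → Form P
  | impl : Form P → Form P → Form P
  | idisj : Form P → Form P → Form P
  | yields : Form P → Form P → Form P

/-- An inhabited neighborhood model (in-model). -/
structure InModel (P : Type) where
  W : Type
  ne : Nonempty W
  Nb : W → Set (Set W)
  nb_nonempty : ∀ w, ∀ s ∈ Nb w, s.Nonempty
  V : W → P → Bool

/-- Support of a formula at an information state. -/
def support {P : Type} (M : InModel P) : Form P → Set M.W → Prop
  | .atom p, s => ∀ w ∈ s, M.V w p = true
  | .bot, s => s = ∅
  | .and φ ψ, s => support M φ s ∧ support M ψ s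
  | .impl φ ψ, s => ∀ t : Set M.W, t ⊆ s → support M φ t → support M ψ t
  | .idisj φ ψ, s => support M φ s ∨ support M ψ s
  | .yields φ ψ, s => ∀ w ∈ s, ∀ t ∈ M.Nb w, support M φ t → support M ψ t

/-- Truth at a world: support at the corresponding singleton state. -/
def truth {P : Type} (M : InModel P) (w : M.W) (φ : Form P) : Prop :=
  support M φ {w}

/-- A formula is truth-conditional if support at any state amounts to truth at
every world of the state. -/
def TruthConditional {P : Type} (φ : Form P) : Prop :=
  ∀ (M : InModel P) (s : Set M.W), support M φ s ↔ ∀ w ∈ s, truth M w φ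

/-- Logical equivalence: same supporting states in every in-model. -/
def EquivF {P : Type} (φ ψ : Form P) : Prop :=
  ∀ (M : InModel P) (s : Set M.W), support M φ s ↔ support M ψ s

def Form.neg {P : Type} (φ : Form P) : Form P := .impl φ .bot
def Form.top {P : Type} : Form P := Form.neg .bot
def Form.or {P : Type} (φ ψ : Form P) : Form P := Form.neg (.and (Form.neg φ) (Form.neg ψ))
def Form.box {P : Type} (φ : Form P) : Form P := .yields Form.top φ
def Form.dia {P : Type} (φ : Form P) : Form P := Form.neg (.yields φ .bot)
def Form.quest {P : Type} (φ : Form P) : Form P := .idisj φ (Form.neg φ)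

/-- Declaratives: formulas where `⩔` occurs only within the scope of `⟹`. -/
inductive IsDecl {P : Type} : Form P → Prop
  | atom (p : P) : IsDecl (.atom p)
  | bot : IsDecl .bot
  | and {α β : Form P} : IsDecl α → IsDecl β → IsDecl (.and α β)
  | impl {α β : Form P} : IsDecl α → IsDecl β → IsDecl (.impl α β)
  | yields (φ ψ : Form P) : IsDecl (.yields φ ψ)

/-- The declarative variant `φ^!` of a formula. -/
def declOf {P : Type} : Form P → Form P
  | .atom p => .atom p
  | .bot => .bot
  | .and φ ψ => .and (declOf φ) (declOf ψ)
  | .impl φ ψ => .impl (declOf φ) (declOf ψ)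
  | .idisj φ ψ => Form.or (declOf φ) (declOf ψ)
  | .yields φ ψ => .yields φ ψ

/-!
Support is persistent, and the empty state supports every formula. Hence `→` behaves classically at
singleton states, so that `φ` and `φ^!` are true at the same worlds. Declaratives are
truth-conditional, because atoms, `⊥` and modal formulas are and because the property passes to
conjunctions and from `ψ` to `φ → ψ`. So if `φ` is truth-conditional, support of `φ` and of `φ^!`
at a state reduces to truth at its worlds, where the two formulas agree.
-/

section Support

variable {P : Type} (M : InModel P)

theorem support_empty (φ : Form P) : support M φ ∅ := by
  induction φ with
  | atom p => simp [support]
  | bot => rfl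
  | and φ ψ ihφ ihψ => exact ⟨ihφ, ihψ⟩
  | impl φ ψ _ ihψ =>
    intro t ht _
    rwa [Set.subset_empty_iff.mp ht]
  | idisj φ ψ ihφ _ => exact Or.inl ihφ
  | yields φ ψ => simp [support]

theorem support_antitone (φ : Form P) : Antitone (support M φ) := by
  intro t s hts hs
  induction φ with
  | atom p => exact fun w hw => hs w (hts hw)
  | bot => exact Set.subset_eq_empty hts hs
  | and φ ψ ihφ ihψ => exact ⟨ihφ hs.1, ihψ hs.2⟩
  | impl φ ψ => exact fun u hut => hs u (hut.trans hts)
  | idisj φ ψ ihφ ihψ => exact hs.imp ihφ ihψ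
  | yields φ ψ => exact fun w hw => hs w (hts hw)

end Support

section Truth

variable {P : Type} {M : InModel P} {w : M.W} {φ ψ : Form P}

theorem truth_of_support {s : Set M.W} (hs : support M φ s) (hw : w ∈ s) : truth M w φ :=
  support_antitone M φ (Set.singleton_subset_iff.mpr hw) hs

theorem not_truth_bot : ¬ truth M w .bot :=
  Set.singleton_ne_empty w

theorem truth_and : truth M w (.and φ ψ) ↔ truth M w φ ∧ truth M w ψ :=
  Iff.rfl

theorem truth_idisj : truth M w (.idisj φ ψ) ↔ truth M w φ ∨ truth M w ψ :=
  Iff.rfl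

theorem truth_impl : truth M w (.impl φ ψ) ↔ (truth M w φ → truth M w ψ) := by
  refine ⟨fun h => h {w} subset_rfl, fun h t ht hφ => ?_⟩
  rcases Set.subset_singleton_iff_eq.mp ht with rfl | rfl
  · exact support_empty M ψ
  · exact h hφ

theorem truth_neg : truth M w φ.neg ↔ ¬ truth M w φ := by
  rw [Form.neg, truth_impl, iff_false_intro not_truth_bot, imp_false]

theorem truth_or : truth M w (φ.or ψ) ↔ truth M w φ ∨ truth M w ψ := by
  rw [Form.or, truth_neg, truth_and, truth_neg, truth_neg, ← or_iff_not_and_not]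

theorem truth_declOf : truth M w (declOf φ) ↔ truth M w φ := by
  induction φ with
  | atom | bot | yields => rfl
  | and φ ψ ihφ ihψ => rw [declOf, truth_and, truth_and, ihφ, ihψ]
  | impl φ ψ ihφ ihψ => rw [declOf, truth_impl, truth_impl, ihφ, ihψ]
  | idisj φ ψ ihφ ihψ => rw [declOf, truth_or, truth_idisj, ihφ, ihψ]

end Truth

section TruthConditional

variable {P : Type} {φ ψ : Form P}

theorem TruthConditional.atom (p : P) : TruthConditional (.atom p) := by
  intro M s
  simp [support, truth]

theorem TruthConditional.bot : TruthConditional (.bot : Form P) := by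
  intro M s
  simp only [not_truth_bot, imp_false]
  exact Set.eq_empty_iff_forall_notMem

theorem TruthConditional.and (hφ : TruthConditional φ) (hψ : TruthConditional ψ) :
    TruthConditional (.and φ ψ) := by
  intro M s
  rw [support, hφ M s, hψ M s]
  exact forall₂_and.symm

theorem TruthConditional.impl (φ : Form P) (hψ : TruthConditional ψ) :
    TruthConditional (.impl φ ψ) := by
  refine fun M s => ⟨fun hs _ => truth_of_support hs, fun h t hts hφ => ?_⟩
  exact (hψ M t).mpr fun w hw => truth_impl.mp (h w (hts hw)) (truth_of_support hφ hw)

theorem TruthConditional.yields (φ ψ : Form P) : TruthConditional (.yields φ ψ) := by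
  intro M s
  simp [support, truth]

theorem IsDecl.truthConditional (hφ : IsDecl φ) : TruthConditional φ := by
  induction hφ with
  | atom p => exact .atom p
  | bot => exact .bot
  | and _ _ ihα ihβ => exact ihα.and ihβ
  | impl _ _ _ ihβ => exact ihβ.impl _
  | yields φ ψ => exact .yields φ ψ

end TruthConditional

section Declarative

variable {P : Type} {φ ψ : Form P}

theorem IsDecl.neg (hφ : IsDecl φ) : IsDecl φ.neg :=
  hφ.impl .bot

theorem IsDecl.or (hφ : IsDecl φ) (hψ : IsDecl ψ) : IsDecl (φ.or ψ) :=
  (hφ.neg.and hψ.neg).neg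

theorem isDecl_declOf (φ : Form P) : IsDecl (declOf φ) := by
  induction φ with
  | atom p => exact .atom p
  | bot => exact .bot
  | and φ ψ ihφ ihψ => exact ihφ.and ihψ
  | impl φ ψ ihφ ihψ => exact ihφ.impl ihψ
  | idisj φ ψ ihφ ihψ => exact ihφ.or ihψ
  | yields φ ψ => exact .yields φ ψ

theorem support_declOf_iff_forall_truth {M : InModel P} {s : Set M.W} :
    support M (declOf φ) s ↔ ∀ w ∈ s, truth M w φ := by
  simpa only [truth_declOf] using (isDecl_declOf φ).truthConditional M s

end Declarative

/-- every truth-conditional formula is equivalent to a declarative,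
in particular to its declarative variant `φ^!`. -/
theorem truthConditional_equiv_declOf {P : Type} (φ : Form P)
    (hφ : TruthConditional φ) : IsDecl (declOf φ) ∧ EquivF φ (declOf φ) :=
  ⟨isDecl_declOf φ, fun M s => (hφ M s).trans support_declOf_iff_forall_truth.symm⟩
end

section
/- For any formulas φ, ψ of L_⟹, the formula ⟐(φ⩔ψ) is logically equivalent to ⟐φ ∨ ⟐ψ. -/
/-!
Support is persistent, so a negation is supported exactly where its argument is false at every
world, and negations are truth-conditional. Both sides of the equivalence are negations, and at a
world `w` they say that some neighborhood of `w` supports `φ` or `ψ`: as `⩔` is evaluated at a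
single neighborhood, the existential quantifier distributes over it.
-/

section

variable {P : Type} (M : InModel P)

theorem support_neg_iff (φ : Form P) (s : Set M.W) :
    support M φ.neg s ↔ ∀ w ∈ s, ¬ truth M w φ := by
  constructor
  · intro h w hw hφ
    exact Set.singleton_ne_empty w (h {w} (Set.singleton_subset_iff.2 hw) hφ)
  · intro h t hts hφ
    refine Set.eq_empty_of_forall_notMem fun w hw => h w (hts hw) ?_
    exact support_antitone M φ (Set.singleton_subset_iff.2 hw) hφ

theorem truth_neg_iff (φ : Form P) (w : M.W) : truth M w φ.neg ↔ ¬ truth M w φ := by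
  rw [truth, support_neg_iff]
  simp only [Set.mem_singleton_iff, forall_eq]

theorem support_or_iff (φ ψ : Form P) (s : Set M.W) :
    support M (φ.or ψ) s ↔ ∀ w ∈ s, truth M w φ ∨ truth M w ψ := by
  rw [Form.or, support_neg_iff]
  refine forall₂_congr fun w _ => ?_
  calc ¬ truth M w (.and φ.neg ψ.neg)
      ↔ ¬ (truth M w φ.neg ∧ truth M w ψ.neg) := Iff.rfl
    _ ↔ truth M w φ ∨ truth M w ψ := by
      rw [truth_neg_iff, truth_neg_iff, ← not_or, not_not]

theorem truth_yields_iff (φ ψ : Form P) (w : M.W) :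
    truth M w (.yields φ ψ) ↔ ∀ t ∈ M.Nb w, support M φ t → support M ψ t := by
  simp only [truth, support, Set.mem_singleton_iff, forall_eq]

theorem truth_dia_iff (φ : Form P) (w : M.W) :
    truth M w φ.dia ↔ ∃ t ∈ M.Nb w, support M φ t := by
  rw [Form.dia, truth_neg_iff, truth_yields_iff]
  push Not
  exact exists_congr fun t => and_congr_right fun ht =>
    and_iff_left (M.nb_nonempty w t ht).ne_empty

theorem truth_dia_idisj_iff (φ ψ : Form P) (w : M.W) :
    truth M w (Form.dia (.idisj φ ψ)) ↔ truth M w φ.dia ∨ truth M w ψ.dia := by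
  simp only [truth_dia_iff, support, and_or_left, exists_or]

end

theorem truthConditional_neg {P : Type} (φ : Form P) : TruthConditional φ.neg := by
  intro M s
  simp only [support_neg_iff, truth_neg_iff]

/-- `⟐` distributes over inquisitive disjunction as declarative
disjunction. -/
theorem dia_idisj {P : Type} (φ ψ : Form P) :
    EquivF (Form.dia (.idisj φ ψ)) (Form.or (Form.dia φ) (Form.dia ψ)) := by
  intro M s
  calc support M (Form.dia (.idisj φ ψ)) s
      ↔ ∀ w ∈ s, truth M w (Form.dia (.idisj φ ψ)) := truthConditional_neg _ M s
    _ ↔ ∀ w ∈ s, truth M w φ.dia ∨ truth M w ψ.dia :=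
      forall₂_congr fun w _ => truth_dia_idisj_iff M φ ψ w
    _ ↔ support M (φ.dia.or ψ.dia) s := (support_or_iff M φ.dia ψ.dia s).symm
end

section
/- (Monotonicity properties of fragments) (i) Every formula of the fragment L_⟐ is upward-invariant (and hence convex- and union-invariant). (ii) Every formula of the fragment L_⊞ is downward-invariant (and hence convex-invariant). (iii) Every formula of the fragment L_⊞⟐ is convex-invariant. (iv) Every formula of the fragment L_⟹! is union-invariant. -/
/-- The fragment `L_⟐`. -/
inductive InLdia {P : Type} : Form P → Prop
  | atom (p : P) : InLdia (.atom p)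
  | bot : InLdia .bot
  | and {φ ψ : Form P} : InLdia φ → InLdia ψ → InLdia (.and φ ψ)
  | impl {φ ψ : Form P} : InLdia φ → InLdia ψ → InLdia (.impl φ ψ)
  | idisj {φ ψ : Form P} : InLdia φ → InLdia ψ → InLdia (.idisj φ ψ)
  | dia {φ : Form P} : InLdia φ → InLdia (Form.dia φ)

/-- The fragment `L_⊞`. -/
inductive InLbox {P : Type} : Form P → Prop
  | atom (p : P) : InLbox (.atom p)
  | bot : InLbox .bot
  | and {φ ψ : Form P} : InLbox φ → InLbox ψ → InLbox (.and φ ψ)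
  | impl {φ ψ : Form P} : InLbox φ → InLbox ψ → InLbox (.impl φ ψ)
  | idisj {φ ψ : Form P} : InLbox φ → InLbox ψ → InLbox (.idisj φ ψ)
  | box {φ : Form P} : InLbox φ → InLbox (Form.box φ)

/-- The fragment `L_⊞⟐`. -/
inductive InLboxdia {P : Type} : Form P → Prop
  | atom (p : P) : InLboxdia (.atom p)
  | bot : InLboxdia .bot
  | and {φ ψ : Form P} : InLboxdia φ → InLboxdia ψ → InLboxdia (.and φ ψ)
  | impl {φ ψ : Form P} : InLboxdia φ → InLboxdia ψ → InLboxdia (.impl φ ψ)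
  | idisj {φ ψ : Form P} : InLboxdia φ → InLboxdia ψ → InLboxdia (.idisj φ ψ)
  | box {φ : Form P} : InLboxdia φ → InLboxdia (Form.box φ)
  | dia {φ : Form P} : InLboxdia φ → InLboxdia (Form.dia φ)

/-- The fragment `L_⟹!`: every modal subformula has the form `φ ⟹ α` with `α`
a declarative. -/
inductive InLyd {P : Type} : Form P → Prop
  | atom (p : P) : InLyd (.atom p)
  | bot : InLyd .bot
  | and {φ ψ : Form P} : InLyd φ → InLyd ψ → InLyd (.and φ ψ)
  | impl {φ ψ : Form P} : InLyd φ → InLyd ψ → InLyd (.impl φ ψ)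
  | idisj {φ ψ : Form P} : InLyd φ → InLyd ψ → InLyd (.idisj φ ψ)
  | yields {φ α : Form P} : InLyd φ → InLyd α → IsDecl α → InLyd (.yields φ α)

/-- Upward closure `M^↑`. -/
def InModel.up {P : Type} (M : InModel P) : InModel P where
  W := M.W
  ne := M.ne
  Nb := fun w => {t | t.Nonempty ∧ ∃ s ∈ M.Nb w, s ⊆ t}
  nb_nonempty := fun _ _ hs => hs.1
  V := M.V

/-- Downward closure `M^↓`. -/
def InModel.down {P : Type} (M : InModel P) : InModel P where
  W := M.W
  ne := M.ne
  Nb := fun w => {t | t.Nonempty ∧ ∃ s ∈ M.Nb w, t ⊆ s}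
  nb_nonempty := fun _ _ hs => hs.1
  V := M.V

/-- Convex closure `M^↕`. -/
def InModel.conv {P : Type} (M : InModel P) : InModel P where
  W := M.W
  ne := M.ne
  Nb := fun w => {t | t.Nonempty ∧ ∃ s ∈ M.Nb w, ∃ s' ∈ M.Nb w, s ⊆ t ∧ t ⊆ s'}
  nb_nonempty := fun _ _ hs => hs.1
  V := M.V

/-- Union closure `M^∪`. -/
def InModel.uni {P : Type} (M : InModel P) : InModel P where
  W := M.W
  ne := M.ne
  Nb := fun w => {t | t.Nonempty ∧ ∃ S ⊆ M.Nb w, t = ⋃₀ S}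
  nb_nonempty := fun _ _ hs => hs.1
  V := M.V

def UpInvariant {P : Type} (φ : Form P) : Prop :=
  ∀ (M : InModel P) (s : Set M.W), support M φ s ↔ support M.up φ s

def DownInvariant {P : Type} (φ : Form P) : Prop :=
  ∀ (M : InModel P) (s : Set M.W), support M φ s ↔ support M.down φ s

def ConvexInvariant {P : Type} (φ : Form P) : Prop :=
  ∀ (M : InModel P) (s : Set M.W), support M φ s ↔ support M.conv φ s

def UnionInvariant {P : Type} (φ : Form P) : Prop :=
  ∀ (M : InModel P) (s : Set M.W), support M φ s ↔ support M.uni φ s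

/-! Each modality reads the neighborhoods of a world only through some closure of them. By
persistence of support, `⊞φ` depends only on the lower closure of `Σ(w)` and `⟐φ` only on its upper
closure; and since declaratives are preserved by unions of states, `φ ⟹ α` with `α` declarative
depends only on the union closure of `Σ(w)`. A formula built from such modalities cannot distinguish
two models that differ only in their neighborhoods if these have the same closures of the relevant
kinds. -/

/-- The closure `{⋃₀ S | S ⊆ A}` of a family of sets under arbitrary unions. It contains `∅`, the
union of the empty family, even if `A` does not; `M^∪` has its nonempty members as neighborhoods. -/
def unionClosure {α : Type*} (A : Set (Set α)) : Set (Set α) :=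
  {t | ∃ S ⊆ A, t = ⋃₀ S}

section UnionClosure

variable {α : Type*} {A B : Set (Set α)} {t : Set α}

theorem mem_unionClosure_iff :
    t ∈ unionClosure A ↔ ∀ x ∈ t, ∃ s ∈ A, x ∈ s ∧ s ⊆ t := by
  constructor
  · rintro ⟨S, hSA, rfl⟩ x ⟨s, hs, hxs⟩
    exact ⟨s, hSA hs, hxs, Set.subset_sUnion_of_mem hs⟩
  · intro h
    refine ⟨{s ∈ A | s ⊆ t}, Set.sep_subset _ _, ?_⟩
    refine Set.Subset.antisymm (fun x hx => ?_) (Set.sUnion_subset fun s hs => hs.2)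
    obtain ⟨s, hsA, hxs, hst⟩ := h x hx
    exact ⟨s, ⟨hsA, hst⟩, hxs⟩

theorem subset_unionClosure : A ⊆ unionClosure A :=
  fun t ht => mem_unionClosure_iff.2 fun _ hx => ⟨t, ht, hx, subset_rfl⟩

theorem unionClosure_mono (hAB : A ⊆ B) : unionClosure A ⊆ unionClosure B :=
  fun _ ⟨S, hSA, ht⟩ => ⟨S, hSA.trans hAB, ht⟩

theorem unionClosure_unionClosure : unionClosure (unionClosure A) = unionClosure A := by
  refine Set.Subset.antisymm (fun t ht => mem_unionClosure_iff.2 fun x hx => ?_)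
    subset_unionClosure
  obtain ⟨u, hu, hxu, hut⟩ := mem_unionClosure_iff.1 ht x hx
  obtain ⟨s, hs, hxs, hsu⟩ := mem_unionClosure_iff.1 hu x hxu
  exact ⟨s, hs, hxs, hsu.trans hut⟩

end UnionClosure

section Support

variable {P : Type} {M : InModel P} {φ α : Form P} {s t : Set M.W}

theorem support.mono (hs : support M φ s) (hts : t ⊆ s) : support M φ t := by
  induction φ with
  | atom p => exact fun w hw => hs w (hts hw)
  | bot => exact Set.subset_eq_empty hts hs
  | and φ ψ ihφ ihψ => exact ⟨ihφ hs.1, ihψ hs.2⟩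
  | impl φ ψ => exact fun u hu => hs u (hu.trans hts)
  | idisj φ ψ ihφ ihψ => exact hs.imp ihφ ihψ
  | yields φ ψ => exact fun w hw => hs w (hts hw)

theorem IsDecl.support_sUnion (hα : IsDecl α) {S : Set (Set M.W)}
    (hS : ∀ s ∈ S, support M α s) : support M α (⋃₀ S) := by
  induction hα generalizing S with
  | atom p => exact fun w ⟨s, hs, hw⟩ => hS s hs w hw
  | bot => exact Set.sUnion_eq_empty.2 hS
  | and _ _ ihα ihβ => exact ⟨ihα fun s hs => (hS s hs).1, ihβ fun s hs => (hS s hs).2⟩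
  | @impl α β _ _ _ ihβ =>
    intro t htS hα
    have sUnion_inter_eq : ⋃₀ ((t ∩ ·) '' S) = t := by
      rw [Set.sUnion_image, ← Set.inter_iUnion₂, ← Set.sUnion_eq_biUnion, Set.inter_eq_left.2 htS]
    rw [← sUnion_inter_eq]
    refine ihβ (Set.forall_mem_image.2 fun s hs => ?_)
    exact hS s hs (t ∩ s) Set.inter_subset_right (hα.mono Set.inter_subset_left)
  | yields φ ψ => exact fun w ⟨s, hs, hw⟩ => hS s hs w hw

theorem support_box_iff :
    support M φ.box s ↔ ∀ w ∈ s, ∀ t ∈ lowerClosure (M.Nb w), support M φ t := by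
  refine forall₂_congr fun w _ => ⟨?_, fun h t ht _ => h t (subset_lowerClosure ht)⟩
  rintro h t ⟨u, hu, htu⟩
  exact (h u hu fun _ _ => id).mono htu

theorem support_yields_bot_iff :
    support M (.yields φ .bot) s ↔ ∀ w ∈ s, ∀ t ∈ upperClosure (M.Nb w), ¬support M φ t := by
  refine forall₂_congr fun w _ => ⟨?_, fun h t ht hφ => (h t (subset_upperClosure ht) hφ).elim⟩
  rintro h t ⟨u, hu, hut⟩ hφ
  exact (M.nb_nonempty w u hu).ne_empty (h u hu (hφ.mono hut))

theorem IsDecl.support_yields_iff (hα : IsDecl α) :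
    support M (.yields φ α) s ↔
      ∀ w ∈ s, ∀ t ∈ unionClosure (M.Nb w), support M φ t → support M α t := by
  refine forall₂_congr fun w _ => ⟨?_, fun h t ht => h t (subset_unionClosure ht)⟩
  rintro h t ⟨S, hS, rfl⟩ hφ
  exact hα.support_sUnion fun u hu => h u (hS hu) (hφ.mono (Set.subset_sUnion_of_mem hu))

end Support

/-- The in-model with the worlds and valuation of `M` and the neighborhood map `N`. Each of `M^↑`,
`M^↓`, `M^↕` and `M^∪` is definitionally of this form. -/
abbrev InModel.withNb {P : Type} (M : InModel P) (N : M.W → Set (Set M.W))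
    (hN : ∀ w, ∀ s ∈ N w, s.Nonempty) : InModel P :=
  { M with Nb := N, nb_nonempty := hN }

/-- The formula `φ` is supported at the same states of `M` when its neighborhood map is replaced by
`N`. The four notions of invariance are instances, quantified over `M`. -/
def SupportInvariant {P : Type} (M : InModel P) (N : M.W → Set (Set M.W))
    (hN : ∀ w, ∀ s ∈ N w, s.Nonempty) (φ : Form P) : Prop :=
  ∀ s : Set M.W, support M φ s ↔ support (M.withNb N hN) φ s

section Invariance

variable {P : Type} {M : InModel P} {N : M.W → Set (Set M.W)}
  {hN : ∀ w, ∀ s ∈ N w, s.Nonempty} {φ ψ α : Form P}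

namespace SupportInvariant

theorem atom (p : P) : SupportInvariant M N hN (.atom p) :=
  fun _ => Iff.rfl

theorem bot : SupportInvariant M N hN .bot :=
  fun _ => Iff.rfl

theorem and (hφ : SupportInvariant M N hN φ) (hψ : SupportInvariant M N hN ψ) :
    SupportInvariant M N hN (.and φ ψ) :=
  fun s => and_congr (hφ s) (hψ s)

theorem impl (hφ : SupportInvariant M N hN φ) (hψ : SupportInvariant M N hN ψ) :
    SupportInvariant M N hN (.impl φ ψ) :=
  fun _ => forall₂_congr fun t _ => imp_congr (hφ t) (hψ t)

theorem idisj (hφ : SupportInvariant M N hN φ) (hψ : SupportInvariant M N hN ψ) :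
    SupportInvariant M N hN (.idisj φ ψ) :=
  fun s => or_congr (hφ s) (hψ s)

theorem box (hφ : SupportInvariant M N hN φ)
    (hlower : ∀ w, lowerClosure (N w) = lowerClosure (M.Nb w)) :
    SupportInvariant M N hN φ.box := fun s => by
  simp only [support_box_iff, hlower, hφ _]

theorem yields_bot (hφ : SupportInvariant M N hN φ)
    (hupper : ∀ w, upperClosure (N w) = upperClosure (M.Nb w)) :
    SupportInvariant M N hN (.yields φ .bot) := fun s => by
  simp only [support_yields_bot_iff, hupper, hφ _]

theorem dia (hφ : SupportInvariant M N hN φ)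
    (hupper : ∀ w, upperClosure (N w) = upperClosure (M.Nb w)) :
    SupportInvariant M N hN φ.dia :=
  (hφ.yields_bot hupper).impl bot

theorem yields_of_isDecl (hφ : SupportInvariant M N hN φ) (hα : SupportInvariant M N hN α)
    (hdecl : IsDecl α) (hunion : ∀ w, unionClosure (N w) = unionClosure (M.Nb w)) :
    SupportInvariant M N hN (.yields φ α) := fun s => by
  simp only [hdecl.support_yields_iff, hunion, hφ _, hα _]

end SupportInvariant

theorem InLdia.supportInvariant (hφ : InLdia φ)
    (hupper : ∀ w, upperClosure (N w) = upperClosure (M.Nb w)) : SupportInvariant M N hN φ := by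
  induction hφ with
  | atom p => exact .atom p
  | bot => exact .bot
  | and _ _ ihφ ihψ => exact ihφ.and ihψ
  | impl _ _ ihφ ihψ => exact ihφ.impl ihψ
  | idisj _ _ ihφ ihψ => exact ihφ.idisj ihψ
  | dia _ ihφ => exact ihφ.dia hupper

theorem InLbox.supportInvariant (hφ : InLbox φ)
    (hlower : ∀ w, lowerClosure (N w) = lowerClosure (M.Nb w)) : SupportInvariant M N hN φ := by
  induction hφ with
  | atom p => exact .atom p
  | bot => exact .bot
  | and _ _ ihφ ihψ => exact ihφ.and ihψ
  | impl _ _ ihφ ihψ => exact ihφ.impl ihψ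
  | idisj _ _ ihφ ihψ => exact ihφ.idisj ihψ
  | box _ ihφ => exact ihφ.box hlower

theorem InLboxdia.supportInvariant (hφ : InLboxdia φ)
    (hlower : ∀ w, lowerClosure (N w) = lowerClosure (M.Nb w))
    (hupper : ∀ w, upperClosure (N w) = upperClosure (M.Nb w)) : SupportInvariant M N hN φ := by
  induction hφ with
  | atom p => exact .atom p
  | bot => exact .bot
  | and _ _ ihφ ihψ => exact ihφ.and ihψ
  | impl _ _ ihφ ihψ => exact ihφ.impl ihψ
  | idisj _ _ ihφ ihψ => exact ihφ.idisj ihψ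
  | box _ ihφ => exact ihφ.box hlower
  | dia _ ihφ => exact ihφ.dia hupper

theorem InLyd.supportInvariant (hφ : InLyd φ)
    (hunion : ∀ w, unionClosure (N w) = unionClosure (M.Nb w)) : SupportInvariant M N hN φ := by
  induction hφ with
  | atom p => exact .atom p
  | bot => exact .bot
  | and _ _ ihφ ihψ => exact ihφ.and ihψ
  | impl _ _ ihφ ihψ => exact ihφ.impl ihψ
  | idisj _ _ ihφ ihψ => exact ihφ.idisj ihψ
  | yields _ _ hdecl ihφ ihα => exact ihφ.yields_of_isDecl ihα hdecl hunion

end Invariance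

namespace InModel

variable {P : Type} (M : InModel P) (w : M.W)

theorem nb_subset_nb_up : M.Nb w ⊆ M.up.Nb w :=
  fun t ht => ⟨M.nb_nonempty w t ht, t, ht, subset_rfl⟩

theorem nb_subset_nb_down : M.Nb w ⊆ M.down.Nb w :=
  fun t ht => ⟨M.nb_nonempty w t ht, t, ht, subset_rfl⟩

theorem nb_subset_nb_conv : M.Nb w ⊆ M.conv.Nb w :=
  fun t ht => ⟨M.nb_nonempty w t ht, t, ht, t, ht, subset_rfl, subset_rfl⟩

theorem nb_subset_nb_uni : M.Nb w ⊆ M.uni.Nb w :=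
  fun t ht => ⟨M.nb_nonempty w t ht, subset_unionClosure ht⟩

theorem upperClosure_nb_up : upperClosure (M.up.Nb w) = upperClosure (M.Nb w) :=
  le_antisymm (upperClosure_anti (M.nb_subset_nb_up w)) (le_upperClosure.2 fun _ ht => ht.2)

theorem lowerClosure_nb_down : lowerClosure (M.down.Nb w) = lowerClosure (M.Nb w) :=
  le_antisymm (lowerClosure_le.2 fun _ ht => ht.2) (lowerClosure_mono (M.nb_subset_nb_down w))

theorem upperClosure_nb_conv : upperClosure (M.conv.Nb w) = upperClosure (M.Nb w) :=
  le_antisymm (upperClosure_anti (M.nb_subset_nb_conv w))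
    (le_upperClosure.2 fun _ ⟨_, s, hs, _, _, hst, _⟩ => ⟨s, hs, hst⟩)

theorem lowerClosure_nb_conv : lowerClosure (M.conv.Nb w) = lowerClosure (M.Nb w) :=
  le_antisymm (lowerClosure_le.2 fun _ ⟨_, _, _, s', hs', _, hts'⟩ => ⟨s', hs', hts'⟩)
    (lowerClosure_mono (M.nb_subset_nb_conv w))

theorem upperClosure_nb_uni : upperClosure (M.uni.Nb w) = upperClosure (M.Nb w) := by
  refine le_antisymm (upperClosure_anti (M.nb_subset_nb_uni w)) (le_upperClosure.2 ?_)
  rintro t ⟨⟨x, hx⟩, ht⟩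
  obtain ⟨s, hs, -, hst⟩ := mem_unionClosure_iff.1 ht x hx
  exact ⟨s, hs, hst⟩

theorem unionClosure_nb_uni : unionClosure (M.uni.Nb w) = unionClosure (M.Nb w) :=
  ((unionClosure_mono fun _ ht => ht.2).trans unionClosure_unionClosure.subset).antisymm
    (unionClosure_mono (M.nb_subset_nb_uni w))

end InModel

/-- monotonicity properties of the fragments. -/
theorem monotonicity_of_fragments {P : Type} :
    (∀ φ : Form P, InLdia φ →
      UpInvariant φ ∧ ConvexInvariant φ ∧ UnionInvariant φ) ∧
    (∀ φ : Form P, InLbox φ → DownInvariant φ ∧ ConvexInvariant φ) ∧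
    (∀ φ : Form P, InLboxdia φ → ConvexInvariant φ) ∧
    (∀ φ : Form P, InLyd φ → UnionInvariant φ) := by
  refine ⟨fun φ hφ => ⟨fun M => ?_, fun M => ?_, fun M => ?_⟩,
    fun φ hφ => ⟨fun M => ?_, fun M => ?_⟩, fun φ hφ M => ?_, fun φ hφ M => ?_⟩
  · exact hφ.supportInvariant M.upperClosure_nb_up
  · exact hφ.supportInvariant M.upperClosure_nb_conv
  · exact hφ.supportInvariant M.upperClosure_nb_uni
  · exact hφ.supportInvariant M.lowerClosure_nb_down
  · exact hφ.supportInvariant M.lowerClosure_nb_conv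
  · exact hφ.supportInvariant M.lowerClosure_nb_conv M.upperClosure_nb_conv
  · exact hφ.supportInvariant M.unionClosure_nb_uni
end

section
/- (n-bisimilarity implies n-modal equivalence) For every n ∈ ℕ: if two world-pointed in-models satisfy M,w ∼ₙ M',w', then they make true exactly the same formulas of L_⟹ of modal depth at most n; and if two state-pointed in-models satisfy M,s ∼ₙ M',s', then they support exactly the same formulas of L_⟹ of modal depth at most n. -/
/-- Modal depth. -/
def md {P : Type} : Form P → ℕ
  | .atom _ => 0
  | .bot => 0
  | .and φ ψ => max (md φ) (md ψ)
  | .impl φ ψ => max (md φ) (md ψ)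
  | .idisj φ ψ => max (md φ) (md ψ)
  | .yields φ ψ => max (md φ) (md ψ) + 1

/-- Egli-Milner lifting of a relation between worlds to states. -/
def EM {P : Type} {M M' : InModel P} (Z : M.W → M'.W → Prop)
    (s : Set M.W) (s' : Set M'.W) : Prop :=
  (∀ w ∈ s, ∃ w' ∈ s', Z w w') ∧ (∀ w' ∈ s', ∃ w ∈ s, Z w w')

/-- `Z` is an `n`-bisimulation between `M` and `M'` (indices `i ≤ n`). -/
def IsNBisim {P : Type} (M M' : InModel P) (n : ℕ)
    (Z : ℕ → M.W → M'.W → Prop) : Prop :=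
  ∀ i ≤ n, ∀ w w', Z i w w' →
    (∀ p : P, M.V w p = M'.V w' p) ∧
    (∀ j : ℕ, i = j + 1 →
      (∀ s ∈ M.Nb w, ∃ s' ∈ M'.Nb w', EM (Z j) s s') ∧
      (∀ s' ∈ M'.Nb w', ∃ s ∈ M.Nb w, EM (Z j) s s'))

/-- `n`-bisimilarity of world-pointed models. -/
def NBisimW {P : Type} (n : ℕ) (M : InModel P) (w : M.W)
    (M' : InModel P) (w' : M'.W) : Prop :=
  ∃ Z, IsNBisim M M' n Z ∧ Z n w w'

/-- `n`-bisimilarity of state-pointed models. -/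
def NBisimS {P : Type} (n : ℕ) (M : InModel P) (s : Set M.W)
    (M' : InModel P) (s' : Set M'.W) : Prop :=
  ∃ Z, IsNBisim M M' n Z ∧ EM (Z n) s s'

/-- `Z` is a bisimulation between `M` and `M'`. -/
def IsBisim {P : Type} (M M' : InModel P) (Z : M.W → M'.W → Prop) : Prop :=
  (∃ w w', Z w w') ∧
  ∀ w w', Z w w' →
    (∀ p : P, M.V w p = M'.V w' p) ∧
    (∀ s ∈ M.Nb w, ∃ s' ∈ M'.Nb w', EM Z s s') ∧
    (∀ s' ∈ M'.Nb w', ∃ s ∈ M.Nb w, EM Z s s')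

/-- Bisimilarity of world-pointed models. -/
def BisimW {P : Type} (M : InModel P) (w : M.W)
    (M' : InModel P) (w' : M'.W) : Prop :=
  ∃ Z, IsBisim M M' Z ∧ Z w w'

/-- Bisimilarity of state-pointed models. -/
def BisimS {P : Type} (M : InModel P) (s : Set M.W)
    (M' : InModel P) (s' : Set M'.W) : Prop :=
  ∃ Z, IsBisim M M' Z ∧ EM Z s s'

/-!
By symmetry of `n`-bisimilarity it suffices to transfer support in one direction, by induction on
the formula. For `φ → ψ`, a substate `t' ⊆ s'` is matched by the worlds of `s` related to some world
of `t'`, and symmetry carries the support of `φ` from `t'` back to this substate. For `φ ⟹ ψ`, the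
back condition matches a neighborhood at the cost of one level of bisimilarity, which is paid for by
the decrease in modal depth.
-/

section

variable {P : Type} {M M' : InModel P} {n : ℕ}

theorem EM.flip {Z : M.W → M'.W → Prop} {s : Set M.W} {s' : Set M'.W} (h : EM Z s s') :
    EM (flip Z) s' s :=
  ⟨h.2, h.1⟩

theorem em_singleton_iff {Z : M.W → M'.W → Prop} {w : M.W} {w' : M'.W} :
    EM Z {w} {w'} ↔ Z w w' := by
  simp only [EM, Set.mem_singleton_iff, forall_eq, exists_eq_left, and_self]

theorem EM.exists_subset {Z : M.W → M'.W → Prop} {s : Set M.W} {s' t' : Set M'.W}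
    (h : EM Z s s') (ht' : t' ⊆ s') : ∃ t ⊆ s, EM Z t t' := by
  refine ⟨{w ∈ s | ∃ w' ∈ t', Z w w'}, Set.sep_subset _ _, fun w hw => hw.2, fun w' hw' => ?_⟩
  obtain ⟨w, hw, hww'⟩ := h.2 w' (ht' hw')
  exact ⟨w, ⟨hw, w', hw', hww'⟩, hww'⟩

theorem IsNBisim.flip {Z : ℕ → M.W → M'.W → Prop} (hZ : IsNBisim M M' n Z) :
    IsNBisim M' M n (fun i => flip (Z i)) := by
  intro i hi w' w hww'
  obtain ⟨hV, hNb⟩ := hZ i hi w w' hww'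
  refine ⟨fun p => (hV p).symm, fun j hj => ⟨fun s' hs' => ?_, fun s hs => ?_⟩⟩
  · obtain ⟨s, hs, hss'⟩ := (hNb j hj).2 s' hs'
    exact ⟨s, hs, hss'.flip⟩
  · obtain ⟨s', hs', hss'⟩ := (hNb j hj).1 s hs
    exact ⟨s', hs', hss'.flip⟩

theorem IsNBisim.mono {Z : ℕ → M.W → M'.W → Prop} {m : ℕ} (hZ : IsNBisim M M' n Z)
    (hmn : m ≤ n) : IsNBisim M M' m Z :=
  fun i hi => hZ i (hi.trans hmn)

theorem NBisimW.val_eq {w : M.W} {w' : M'.W} (h : NBisimW n M w M' w') (p : P) :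
    M.V w p = M'.V w' p := by
  obtain ⟨Z, hZ, hww'⟩ := h
  exact (hZ n le_rfl w w' hww').1 p

theorem NBisimW.exists_nbisimS_of_mem_nb {w : M.W} {w' : M'.W} {t' : Set M'.W}
    (h : NBisimW (n + 1) M w M' w') (ht' : t' ∈ M'.Nb w') :
    ∃ t ∈ M.Nb w, NBisimS n M t M' t' := by
  obtain ⟨Z, hZ, hww'⟩ := h
  obtain ⟨t, ht, htt'⟩ := ((hZ (n + 1) le_rfl w w' hww').2 n rfl).2 t' ht'
  exact ⟨t, ht, Z, hZ.mono n.le_succ, htt'⟩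

theorem nbisimS_singleton_iff {w : M.W} {w' : M'.W} :
    NBisimS n M {w} M' {w'} ↔ NBisimW n M w M' w' := by
  simp only [NBisimS, NBisimW, em_singleton_iff]

namespace NBisimS

variable {s : Set M.W} {s' : Set M'.W}

theorem symm (h : NBisimS n M s M' s') : NBisimS n M' s' M s := by
  obtain ⟨Z, hZ, hss'⟩ := h
  exact ⟨fun i => flip (Z i), hZ.flip, hss'.flip⟩

theorem exists_nbisimW_of_mem {w' : M'.W} (h : NBisimS n M s M' s') (hw' : w' ∈ s') :
    ∃ w ∈ s, NBisimW n M w M' w' := by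
  obtain ⟨Z, hZ, hss'⟩ := h
  obtain ⟨w, hw, hww'⟩ := hss'.2 w' hw'
  exact ⟨w, hw, Z, hZ, hww'⟩

theorem exists_subset {t' : Set M'.W} (h : NBisimS n M s M' s') (ht' : t' ⊆ s') :
    ∃ t ⊆ s, NBisimS n M t M' t' := by
  obtain ⟨Z, hZ, hss'⟩ := h
  obtain ⟨t, ht, htt'⟩ := hss'.exists_subset ht'
  exact ⟨t, ht, Z, hZ, htt'⟩

theorem support_imp {φ : Form P} (h : NBisimS n M s M' s') (hmd : md φ ≤ n)
    (hs : support M φ s) : support M' φ s' := by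
  induction φ generalizing n M M' with
  | atom p =>
    intro w' hw'
    obtain ⟨w, hw, hww'⟩ := h.exists_nbisimW_of_mem hw'
    exact (hww'.val_eq p).symm.trans (hs w hw)
  | bot =>
    refine Set.eq_empty_of_forall_notMem fun w' hw' => ?_
    obtain ⟨w, hw, -⟩ := h.exists_nbisimW_of_mem hw'
    exact Set.eq_empty_iff_forall_notMem.1 hs w hw
  | and φ ψ ihφ ihψ =>
    obtain ⟨hφ, hψ⟩ := max_le_iff.1 hmd
    exact hs.imp (ihφ h hφ) (ihψ h hψ)
  | idisj φ ψ ihφ ihψ =>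
    obtain ⟨hφ, hψ⟩ := max_le_iff.1 hmd
    exact hs.imp (ihφ h hφ) (ihψ h hψ)
  | impl φ ψ ihφ ihψ =>
    obtain ⟨hφ, hψ⟩ := max_le_iff.1 hmd
    intro t' ht' hφt'
    obtain ⟨t, ht, htt'⟩ := h.exists_subset ht'
    have hφt : support M φ t := ihφ htt'.symm hφ hφt'
    exact ihψ htt' hψ (hs t ht hφt)
  | yields φ ψ ihφ ihψ =>
    obtain ⟨m, rfl⟩ : ∃ m, n = m + 1 := Nat.exists_eq_add_one.2 ((Nat.succ_pos _).trans_le hmd)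
    obtain ⟨hφ, hψ⟩ := max_le_iff.1 (Nat.le_of_succ_le_succ hmd)
    intro w' hw' t' ht' hφt'
    obtain ⟨w, hw, hww'⟩ := h.exists_nbisimW_of_mem hw'
    obtain ⟨t, ht, htt'⟩ := hww'.exists_nbisimS_of_mem_nb ht'
    have hφt : support M φ t := ihφ htt'.symm hφ hφt'
    exact ihψ htt' hψ (hs w hw t ht hφt)

theorem support_iff {φ : Form P} (h : NBisimS n M s M' s') (hmd : md φ ≤ n) :
    support M φ s ↔ support M' φ s' :=
  ⟨h.support_imp hmd, h.symm.support_imp hmd⟩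

end NBisimS

end

/-- `n`-bisimilarity implies `n`-modal equivalence, for worlds and
for states. -/
theorem nbisim_implies_modal_equiv {P : Type} (n : ℕ) :
    (∀ (M M' : InModel P) (w : M.W) (w' : M'.W), NBisimW n M w M' w' →
      ∀ φ : Form P, md φ ≤ n → (truth M w φ ↔ truth M' w' φ)) ∧
    (∀ (M M' : InModel P) (s : Set M.W) (s' : Set M'.W), NBisimS n M s M' s' →
      ∀ φ : Form P, md φ ≤ n → (support M φ s ↔ support M' φ s')) := by
  constructor
  · intro M M' w w' h φ hmd
    exact (nbisimS_singleton_iff.2 h).support_iff hmd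
  · intro M M' s s' h φ hmd
    exact h.support_iff hmd
end
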